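/- Let φ(x) be a formula of the correspondence language with at most the free variable x. Then φ(x) is logically equivalent to the (2,1)-standard x-translation ST_21(I,x) of some modal intuitionistic formula I if and only if φ(x) is invariant with respect to (2,1)-modal asimulations. -/

import Mathlib

namespace ModalIntAsim

/-- Binary relation symbols of the correspondence vocabulary: R, R_□, R_◇. -/
inductive RelSym : Type
  | r | box | diam
deriving DecidableEq

/-- Formulas of the correspondence language: classical first-order logic without
identity, with variables indexed by `ℕ`, unary predicate letters `P n` (n : ℕ),
and the three binary relation symbols. -/
inductive FOForm : Type
  | falsum : FOForm
  | pred : ℕ → ℕ → FOForm            -- `pred n v` is `P_n(x_v)`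
  | rel : RelSym → ℕ → ℕ → FOForm    -- `rel s v w` is `S(x_v, x_w)`
  | conj : FOForm → FOForm → FOForm
  | disj : FOForm → FOForm → FOForm
  | impl : FOForm → FOForm → FOForm
  | all : ℕ → FOForm → FOForm
  | ex : ℕ → FOForm → FOForm

namespace FOForm

/-- Free variables of a correspondence formula. -/
def freeVars : FOForm → Finset ℕ
  | falsum => ∅
  | pred _ v => {v}
  | rel _ v w => {v, w}
  | conj f g => f.freeVars ∪ g.freeVars
  | disj f g => f.freeVars ∪ g.freeVars
  | impl f g => f.freeVars ∪ g.freeVars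
  | all v f => f.freeVars \ {v}
  | ex v f => f.freeVars \ {v}

/-- The unary predicate letters occurring in a formula (the binary relation
symbols R, R_□, R_◇ are regarded as belonging to every vocabulary Σ_φ). -/
def predLetters : FOForm → Finset ℕ
  | falsum => ∅
  | pred n _ => {n}
  | rel _ _ _ => ∅
  | conj f g => f.predLetters ∪ g.predLetters
  | disj f g => f.predLetters ∪ g.predLetters
  | impl f g => f.predLetters ∪ g.predLetters
  | all _ f => f.predLetters
  | ex _ f => f.predLetters

/-- Degree of a formula: the greatest number of nested quantifiers. -/
def degree : FOForm → ℕ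
  | falsum => 0
  | pred _ _ => 0
  | rel _ _ _ => 0
  | conj f g => max f.degree g.degree
  | disj f g => max f.degree g.degree
  | impl f g => max f.degree g.degree
  | all _ f => f.degree + 1
  | ex _ f => f.degree + 1

end FOForm

/-- A model of the correspondence language: a domain together with
interpretations of R, R_□, R_◇ and of the unary predicate letters.
(A Θ-model only consults the letters in Θ.) -/
structure Model : Type 1 where
  U : Type
  rel : U → U → Prop
  relBox : U → U → Prop
  relDiam : U → U → Prop
  pred : ℕ → U → Prop

/-- Interpretation of a binary relation symbol in a model. -/
def Model.relOf (M : Model) : RelSym → M.U → M.U → Prop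
  | .r => M.rel
  | .box => M.relBox
  | .diam => M.relDiam

/-- Tarskian satisfaction of a formula in a model under an assignment. -/
def Sat (M : Model) : FOForm → (ℕ → M.U) → Prop
  | .falsum, _ => False
  | .pred n v, α => M.pred n (α v)
  | .rel s v w, α => M.relOf s (α v) (α w)
  | .conj f g, α => Sat M f α ∧ Sat M g α
  | .disj f g, α => Sat M f α ∨ Sat M g α
  | .impl f g, α => Sat M f α → Sat M g α
  | .all v f, α => ∀ u : M.U, Sat M f (Function.update α v u)
  | .ex v f, α => ∃ u : M.U, Sat M f (Function.update α v u)

/-- `M, a ⊨ φ(x)`: φ is true in `M` under any assignment sending `x` to `a`. -/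
def SatAt (M : Model) (a : M.U) (x : ℕ) (φ : FOForm) : Prop :=
  ∀ α : ℕ → M.U, α x = a → Sat M φ α

/-- Logical equivalence of correspondence formulas. -/
def Equiv (φ ψ : FOForm) : Prop :=
  ∀ (M : Model) (α : ℕ → M.U), Sat M φ α ↔ Sat M ψ α

/-- Logical entailment between correspondence formulas. -/
def Entails (φ ψ : FOForm) : Prop :=
  ∀ (M : Model) (α : ℕ → M.U), Sat M φ α → Sat M ψ α

/-- Modal intuitionistic formulas: built from propositional letters `p n`
using ⊥, ∧, ∨, →, □, ◇. -/
inductive MForm : Type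
  | bot : MForm
  | prop : ℕ → MForm
  | conj : MForm → MForm → MForm
  | disj : MForm → MForm → MForm
  | impl : MForm → MForm → MForm
  | box : MForm → MForm
  | diam : MForm → MForm

/-- The (i,j)-standard x-translation `ST_ij`.  `boxOne = true` means the box
clause (□₁) is used (i = 1), `boxOne = false` means (□₂) (i = 2); likewise
`diamOne = true` means the diamond clause (◇₁) (j = 1) and `diamOne = false`
means (◇₂) (j = 2).  Bound variables are chosen fresh as `x+1`, `x+2`. -/
def ST (boxOne diamOne : Bool) : MForm → ℕ → FOForm
  | .bot, _ => .falsum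
  | .prop n, x => .pred n x
  | .conj I J, x => .conj (ST boxOne diamOne I x) (ST boxOne diamOne J x)
  | .disj I J, x => .disj (ST boxOne diamOne I x) (ST boxOne diamOne J x)
  | .impl I J, x =>
      .all (x + 1) (.impl (.rel .r x (x + 1))
        (.impl (ST boxOne diamOne I (x + 1)) (ST boxOne diamOne J (x + 1))))
  | .box I, x =>
      if boxOne then
        .all (x + 1) (.impl (.rel .box x (x + 1)) (ST boxOne diamOne I (x + 1)))
      else
        .all (x + 1) (.impl (.rel .r x (x + 1))
          (.all (x + 2) (.impl (.rel .box (x + 1) (x + 2)) (ST boxOne diamOne I (x + 2)))))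
  | .diam I, x =>
      if diamOne then
        .ex (x + 1) (.conj (.rel .diam x (x + 1)) (ST boxOne diamOne I (x + 1)))
      else
        .all (x + 1) (.impl (.rel .r x (x + 1))
          (.ex (x + 2) (.conj (.rel .diam (x + 1) (x + 2)) (ST boxOne diamOne I (x + 2)))))

/-! ### Conditions on relations between tuples (the k-asimulation conditions).
A relation between the two models is represented by its two directed
components; `N` is the model of the source tuple and `P` that of the target
tuple.  A tuple `(ā_m, a)` is represented as the list `as ++ [a]`, with
`m = as.length`. -/

section TupleConds

variable (N P : Model)

/-- The "p-type" condition: related tuples are nonempty and of equal length. -/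
def TypeCond (A : List N.U → List P.U → Prop) : Prop :=
  ∀ as bs, A as bs → as ≠ [] ∧ as.length = bs.length

/-- (p-base). -/
def BaseCond (Θ : Set ℕ) (A : List N.U → List P.U → Prop) : Prop :=
  ∀ (as : List N.U) (bs : List P.U) (a : N.U) (b : P.U),
    A (as ++ [a]) (bs ++ [b]) → ∀ n ∈ Θ, N.pred n a → P.pred n b

/-- (p-step). -/
def StepCond (k : ℕ) (A : List N.U → List P.U → Prop)
    (Arev : List P.U → List N.U → Prop) : Prop :=
  ∀ (as : List N.U) (bs : List P.U) (a : N.U) (b d : P.U),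
    A (as ++ [a]) (bs ++ [b]) → P.rel b d → as.length < k →
    ∃ c : N.U, N.rel a c ∧ A (as ++ [a, c]) (bs ++ [b, d]) ∧
      Arev (bs ++ [b, d]) (as ++ [a, c])

/-- (p-box-1). -/
def Box1Cond (k : ℕ) (A : List N.U → List P.U → Prop) : Prop :=
  ∀ (as : List N.U) (bs : List P.U) (a : N.U) (b d : P.U),
    A (as ++ [a]) (bs ++ [b]) → P.relBox b d → as.length < k →
    ∃ c : N.U, N.relBox a c ∧ A (as ++ [a, c]) (bs ++ [b, d])

/-- (p-box-2). -/
def Box2Cond (k : ℕ) (A : List N.U → List P.U → Prop) : Prop :=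
  ∀ (as : List N.U) (bs : List P.U) (a : N.U) (b d f : P.U),
    A (as ++ [a]) (bs ++ [b]) → P.rel b d → P.relBox d f → as.length + 1 < k →
    ∃ c e : N.U, N.rel a c ∧ N.relBox c e ∧ A (as ++ [a, c, e]) (bs ++ [b, d, f])

/-- (p-diam-1). -/
def Diam1Cond (k : ℕ) (A : List N.U → List P.U → Prop) : Prop :=
  ∀ (as : List N.U) (bs : List P.U) (a c : N.U) (b : P.U),
    A (as ++ [a]) (bs ++ [b]) → N.relDiam a c → as.length < k →
    ∃ d : P.U, P.relDiam b d ∧ A (as ++ [a, c]) (bs ++ [b, d])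

/-- (p-diam-2(1)). -/
def Diam2aCond (k : ℕ) (A B : List N.U → List P.U → Prop) : Prop :=
  ∀ (as : List N.U) (bs : List P.U) (a : N.U) (b d : P.U),
    A (as ++ [a]) (bs ++ [b]) → P.rel b d → as.length + 1 < k →
    ∃ c : N.U, N.rel a c ∧ B (as ++ [a, c]) (bs ++ [b, d])

/-- (p-diam-2(2)). -/
def Diam2bCond (k : ℕ) (B A : List N.U → List P.U → Prop) : Prop :=
  ∀ (as : List N.U) (bs : List P.U) (a c : N.U) (b : P.U),
    B (as ++ [a]) (bs ++ [b]) → N.relDiam a c → as.length < k →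
    ∃ d : P.U, P.relDiam b d ∧ A (as ++ [a, c]) (bs ++ [b, d])

end TupleConds

/-- An (i,1)-modal ⟨(M₁,t),(M₂,u)⟩_k-asimulation (j = 1): a single relation `A`
given by its two directed components `A12`, `A21`. -/
def IsKAsimD1 (boxOne : Bool) (Θ : Set ℕ) (M₁ M₂ : Model) (t : M₁.U) (u : M₂.U) (k : ℕ)
    (A12 : List M₁.U → List M₂.U → Prop) (A21 : List M₂.U → List M₁.U → Prop) : Prop :=
  TypeCond M₁ M₂ A12 ∧ TypeCond M₂ M₁ A21 ∧
  A12 [t] [u] ∧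
  BaseCond M₁ M₂ Θ A12 ∧ BaseCond M₂ M₁ Θ A21 ∧
  StepCond M₁ M₂ k A12 A21 ∧ StepCond M₂ M₁ k A21 A12 ∧
  (if boxOne then Box1Cond M₁ M₂ k A12 ∧ Box1Cond M₂ M₁ k A21
   else Box2Cond M₁ M₂ k A12 ∧ Box2Cond M₂ M₁ k A21) ∧
  Diam1Cond M₁ M₂ k A12 ∧ Diam1Cond M₂ M₁ k A21

/-- An (i,2)-modal ⟨(M₁,t),(M₂,u)⟩_k-asimulation (j = 2): an ordered pair
(A, B) of relations, each given by its two directed components. -/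
def IsKAsimD2 (boxOne : Bool) (Θ : Set ℕ) (M₁ M₂ : Model) (t : M₁.U) (u : M₂.U) (k : ℕ)
    (A12 : List M₁.U → List M₂.U → Prop) (A21 : List M₂.U → List M₁.U → Prop)
    (B12 : List M₁.U → List M₂.U → Prop) (B21 : List M₂.U → List M₁.U → Prop) : Prop :=
  TypeCond M₁ M₂ A12 ∧ TypeCond M₂ M₁ A21 ∧
  TypeCond M₁ M₂ B12 ∧ TypeCond M₂ M₁ B21 ∧
  A12 [t] [u] ∧
  BaseCond M₁ M₂ Θ A12 ∧ BaseCond M₂ M₁ Θ A21 ∧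
  StepCond M₁ M₂ k A12 A21 ∧ StepCond M₂ M₁ k A21 A12 ∧
  (if boxOne then Box1Cond M₁ M₂ k A12 ∧ Box1Cond M₂ M₁ k A21
   else Box2Cond M₁ M₂ k A12 ∧ Box2Cond M₂ M₁ k A21) ∧
  Diam2aCond M₁ M₂ k A12 B12 ∧ Diam2aCond M₂ M₁ k A21 B21 ∧
  Diam2bCond M₁ M₂ k B12 A12 ∧ Diam2bCond M₂ M₁ k B21 A21

/-- φ(x) is invariant with respect to (i,1)-modal k-asimulations. -/
def KInvariantD1 (boxOne : Bool) (x : ℕ) (φ : FOForm) (k : ℕ) : Prop :=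
  ∀ Θ : Set ℕ, (φ.predLetters : Set ℕ) ⊆ Θ →
  ∀ (M₁ M₂ : Model) (t : M₁.U) (u : M₂.U)
    (A12 : List M₁.U → List M₂.U → Prop) (A21 : List M₂.U → List M₁.U → Prop),
    IsKAsimD1 boxOne Θ M₁ M₂ t u k A12 A21 →
    ∀ (a : M₁.U) (b : M₂.U), A12 [a] [b] → SatAt M₁ a x φ → SatAt M₂ b x φ

/-- φ(x) is invariant with respect to (i,2)-modal k-asimulations. -/
def KInvariantD2 (boxOne : Bool) (x : ℕ) (φ : FOForm) (k : ℕ) : Prop :=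
  ∀ Θ : Set ℕ, (φ.predLetters : Set ℕ) ⊆ Θ →
  ∀ (M₁ M₂ : Model) (t : M₁.U) (u : M₂.U)
    (A12 : List M₁.U → List M₂.U → Prop) (A21 : List M₂.U → List M₁.U → Prop)
    (B12 : List M₁.U → List M₂.U → Prop) (B21 : List M₂.U → List M₁.U → Prop),
    IsKAsimD2 boxOne Θ M₁ M₂ t u k A12 A21 B12 B21 →
    ∀ (a : M₁.U) (b : M₂.U), A12 [a] [b] → SatAt M₁ a x φ → SatAt M₂ b x φ

/-! ### Conditions for asimulations *simpliciter* (relations between elements). -/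

section ElemConds

variable (N P : Model)

/-- (base). -/
def BaseCondE (Θ : Set ℕ) (A : N.U → P.U → Prop) : Prop :=
  ∀ (a : N.U) (b : P.U), A a b → ∀ n ∈ Θ, N.pred n a → P.pred n b

/-- (step). -/
def StepCondE (A : N.U → P.U → Prop) (Arev : P.U → N.U → Prop) : Prop :=
  ∀ (a : N.U) (b d : P.U), A a b → P.rel b d →
    ∃ c : N.U, N.rel a c ∧ A c d ∧ Arev d c

/-- (box-1). -/
def Box1CondE (A : N.U → P.U → Prop) : Prop :=
  ∀ (a : N.U) (b d : P.U), A a b → P.relBox b d →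
    ∃ c : N.U, N.relBox a c ∧ A c d

/-- (box-2). -/
def Box2CondE (A : N.U → P.U → Prop) : Prop :=
  ∀ (a : N.U) (b d f : P.U), A a b → P.rel b d → P.relBox d f →
    ∃ c e : N.U, N.rel a c ∧ N.relBox c e ∧ A e f

/-- (diam-1). -/
def Diam1CondE (A : N.U → P.U → Prop) : Prop :=
  ∀ (a c : N.U) (b : P.U), A a b → N.relDiam a c →
    ∃ d : P.U, P.relDiam b d ∧ A c d

/-- (diam-2(1)). -/
def Diam2aCondE (A B : N.U → P.U → Prop) : Prop :=
  ∀ (a : N.U) (b d : P.U), A a b → P.rel b d →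
    ∃ c : N.U, N.rel a c ∧ B c d

/-- (diam-2(2)). -/
def Diam2bCondE (B A : N.U → P.U → Prop) : Prop :=
  ∀ (a c : N.U) (b : P.U), B a b → N.relDiam a c →
    ∃ d : P.U, P.relDiam b d ∧ A c d

end ElemConds

/-- An (i,1)-modal ⟨(M₁,t),(M₂,u)⟩-asimulation (j = 1). -/
def IsAsimD1 (boxOne : Bool) (Θ : Set ℕ) (M₁ M₂ : Model) (t : M₁.U) (u : M₂.U)
    (A12 : M₁.U → M₂.U → Prop) (A21 : M₂.U → M₁.U → Prop) : Prop :=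
  A12 t u ∧
  BaseCondE M₁ M₂ Θ A12 ∧ BaseCondE M₂ M₁ Θ A21 ∧
  StepCondE M₁ M₂ A12 A21 ∧ StepCondE M₂ M₁ A21 A12 ∧
  (if boxOne then Box1CondE M₁ M₂ A12 ∧ Box1CondE M₂ M₁ A21
   else Box2CondE M₁ M₂ A12 ∧ Box2CondE M₂ M₁ A21) ∧
  Diam1CondE M₁ M₂ A12 ∧ Diam1CondE M₂ M₁ A21

/-- An (i,2)-modal ⟨(M₁,t),(M₂,u)⟩-asimulation (j = 2). -/
def IsAsimD2 (boxOne : Bool) (Θ : Set ℕ) (M₁ M₂ : Model) (t : M₁.U) (u : M₂.U)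
    (A12 : M₁.U → M₂.U → Prop) (A21 : M₂.U → M₁.U → Prop)
    (B12 : M₁.U → M₂.U → Prop) (B21 : M₂.U → M₁.U → Prop) : Prop :=
  A12 t u ∧
  BaseCondE M₁ M₂ Θ A12 ∧ BaseCondE M₂ M₁ Θ A21 ∧
  StepCondE M₁ M₂ A12 A21 ∧ StepCondE M₂ M₁ A21 A12 ∧
  (if boxOne then Box1CondE M₁ M₂ A12 ∧ Box1CondE M₂ M₁ A21
   else Box2CondE M₁ M₂ A12 ∧ Box2CondE M₂ M₁ A21) ∧
  Diam2aCondE M₁ M₂ A12 B12 ∧ Diam2aCondE M₂ M₁ A21 B21 ∧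
  Diam2bCondE M₁ M₂ B12 A12 ∧ Diam2bCondE M₂ M₁ B21 A21

/-- φ(x) is invariant with respect to (i,1)-modal asimulations. -/
def InvariantD1 (boxOne : Bool) (x : ℕ) (φ : FOForm) : Prop :=
  ∀ Θ : Set ℕ, (φ.predLetters : Set ℕ) ⊆ Θ →
  ∀ (M₁ M₂ : Model) (t : M₁.U) (u : M₂.U)
    (A12 : M₁.U → M₂.U → Prop) (A21 : M₂.U → M₁.U → Prop),
    IsAsimD1 boxOne Θ M₁ M₂ t u A12 A21 →
    ∀ (a : M₁.U) (b : M₂.U), A12 a b → SatAt M₁ a x φ → SatAt M₂ b x φ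

/-- φ(x) is invariant with respect to (i,2)-modal asimulations. -/
def InvariantD2 (boxOne : Bool) (x : ℕ) (φ : FOForm) : Prop :=
  ∀ Θ : Set ℕ, (φ.predLetters : Set ℕ) ⊆ Θ →
  ∀ (M₁ M₂ : Model) (t : M₁.U) (u : M₂.U)
    (A12 : M₁.U → M₂.U → Prop) (A21 : M₂.U → M₁.U → Prop)
    (B12 : M₁.U → M₂.U → Prop) (B21 : M₂.U → M₁.U → Prop),
    IsAsimD2 boxOne Θ M₁ M₂ t u A12 A21 B12 B21 →
    ∀ (a : M₁.U) (b : M₂.U), A12 a b → SatAt M₁ a x φ → SatAt M₂ b x φ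

/-! ### Types, complete conjunctions, ω-saturation. -/

/-- `int(φ,x,l)`: the set of (2,2)-standard x-translations of modal
intuitionistic formulas which are (Σ_φ,x,l)-formulas. -/
def intSet (φ : FOForm) (x l : ℕ) : Set FOForm :=
  {ψ | (∃ I : MForm, ψ = ST false false I x) ∧
    ψ.predLetters ⊆ φ.predLetters ∧ ψ.freeVars ⊆ {x} ∧ ψ.degree ≤ l}

/-- `tp_l(φ(x),M,a)`. -/
def tpSet (φ : FOForm) (x l : ℕ) (M : Model) (a : M.U) : Set FOForm :=
  {ψ | ψ ∈ intSet φ x l ∧ SatAt M a x ψ}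

/-- Conjunction of a nonempty list of formulas. -/
def listConj : FOForm → List FOForm → FOForm
  | ψ, [] => ψ
  | ψ, χ :: L => FOForm.conj ψ (listConj χ L)

/-- Ψ(x) is a complete (φ,x,k)-conjunction. -/
def IsCompleteConj (φ : FOForm) (x k : ℕ) (Ψ : FOForm) : Prop :=
  (∃ (ψ₀ : FOForm) (L : List FOForm), ψ₀ ∈ intSet φ x k ∧
    (∀ χ ∈ L, χ ∈ intSet φ x k) ∧ Ψ = listConj ψ₀ L) ∧
  ∃ (M : Model) (a : M.U), SatAt M a x (FOForm.conj Ψ φ) ∧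
    ∀ ψ ∈ tpSet φ x k M a, Entails Ψ ψ

/-- `int_x(Θ)` for the (i,j)-standard translation. -/
def intX (Θ : Set ℕ) (boxOne diamOne : Bool) (x : ℕ) : Set FOForm :=
  {ψ | (∃ I : MForm, ψ = ST boxOne diamOne I x) ∧ (ψ.predLetters : Set ℕ) ⊆ Θ}

/-- `tp_x(M,t)` for the (i,j)-standard translation. -/
def tpX (Θ : Set ℕ) (boxOne diamOne : Bool) (x : ℕ) (M : Model) (t : M.U) : Set FOForm :=
  {ψ | ψ ∈ intX Θ boxOne diamOne x ∧ SatAt M t x ψ}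

/-- `imp_x(M,t) = ⋂ { t̄p_x(M,u) : t R_◇ u }` (for the (2,2)-translation). -/
def impX (Θ : Set ℕ) (x : ℕ) (M : Model) (t : M.U) : Set FOForm :=
  {ψ | ψ ∈ intX Θ false false x ∧ ∀ u : M.U, M.relDiam t u → ¬ SatAt M u x ψ}

/-- ω-saturation: for every finite tuple of parameters (the first `n` values of
an assignment `α`) and every set `Γ` of formulas with finitely many free
variables beyond the parameters, if `Γ` is consistent with the first-order
theory of `[M,ā]` (i.e. satisfiable together with it in some model), then `Γ`
is realized in `[M,ā]`. -/
def OmegaSaturated (M : Model) : Prop :=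
  ∀ (n : ℕ) (α : ℕ → M.U) (Γ : Set FOForm),
    (∃ k : ℕ, ∀ γ ∈ Γ, γ.freeVars ⊆ Finset.range (n + k)) →
    (∃ (N : Model) (β : ℕ → N.U),
      (∀ ψ : FOForm, ψ.freeVars ⊆ Finset.range n → Sat M ψ α → Sat N ψ β) ∧
      ∀ γ ∈ Γ, Sat N γ β) →
    ∃ α' : ℕ → M.U, (∀ i < n, α' i = α i) ∧ ∀ γ ∈ Γ, Sat M γ α'

/-! ### Relativization to a class κ of models. -/

/-- κ(Θ) is first-order axiomatizable for every finite Θ (with R ∈ Θ): for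
every finite set `S` of unary predicate letters there is a set of Θ-sentences
axiomatizing membership in κ. -/
def FinAxiomatizable (κ : Set Model) : Prop :=
  ∀ S : Finset ℕ, ∃ Ax : Set FOForm,
    (∀ ψ ∈ Ax, ψ.freeVars = ∅ ∧ (ψ.predLetters : Set ℕ) ⊆ (S : Set ℕ)) ∧
    ∀ M : Model, M ∈ κ ↔ ∀ ψ ∈ Ax, ∀ α : ℕ → M.U, Sat M ψ α

/-- φ κ-follows from ψ: {ψ, ¬φ} is not κ-satisfiable. -/
def KappaFollows (κ : Set Model) (ψ φ : FOForm) : Prop :=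
  ¬ ∃ M : Model, M ∈ κ ∧ ∃ α : ℕ → M.U, Sat M ψ α ∧ ¬ Sat M φ α

/-- κ-equivalence of formulas. -/
def KappaEquiv (κ : Set Model) (φ ψ : FOForm) : Prop :=
  KappaFollows κ φ ψ ∧ KappaFollows κ ψ φ

/-- φ(x) is κ-invariant with respect to (i,1)-modal asimulations. -/
def KappaInvariantD1 (κ : Set Model) (boxOne : Bool) (x : ℕ) (φ : FOForm) : Prop :=
  ∀ Θ : Set ℕ, (φ.predLetters : Set ℕ) ⊆ Θ →
  ∀ (M₁ M₂ : Model), M₁ ∈ κ → M₂ ∈ κ →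
  ∀ (t : M₁.U) (u : M₂.U)
    (A12 : M₁.U → M₂.U → Prop) (A21 : M₂.U → M₁.U → Prop),
    IsAsimD1 boxOne Θ M₁ M₂ t u A12 A21 →
    ∀ (a : M₁.U) (b : M₂.U), A12 a b → SatAt M₁ a x φ → SatAt M₂ b x φ

/-- φ(x) is κ-invariant with respect to (i,2)-modal asimulations. -/
def KappaInvariantD2 (κ : Set Model) (boxOne : Bool) (x : ℕ) (φ : FOForm) : Prop :=
  ∀ Θ : Set ℕ, (φ.predLetters : Set ℕ) ⊆ Θ →
  ∀ (M₁ M₂ : Model), M₁ ∈ κ → M₂ ∈ κ →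
  ∀ (t : M₁.U) (u : M₂.U)
    (A12 : M₁.U → M₂.U → Prop) (A21 : M₂.U → M₁.U → Prop)
    (B12 : M₁.U → M₂.U → Prop) (B21 : M₂.U → M₁.U → Prop),
    IsAsimD2 boxOne Θ M₁ M₂ t u A12 A21 B12 B21 →
    ∀ (a : M₁.U) (b : M₂.U), A12 a b → SatAt M₁ a x φ → SatAt M₂ b x φ

/-- φ(x) is κ-invariant with respect to (i,j)-modal asimulations
(`diamOne = true` means j = 1). -/
def KappaInvariant (κ : Set Model) (boxOne diamOne : Bool) (x : ℕ) (φ : FOForm) : Prop :=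
  if diamOne then KappaInvariantD1 κ boxOne x φ else KappaInvariantD2 κ boxOne x φ


/-! ### Helper material for the proof -/

/-- Direct semantics of modal formulas for the (2,1)-translation. -/
def MSat (M : Model) : MForm → M.U → Prop
  | .bot, _ => False
  | .prop n, a => M.pred n a
  | .conj I J, a => MSat M I a ∧ MSat M J a
  | .disj I J, a => MSat M I a ∨ MSat M J a
  | .impl I J, a => ∀ b, M.rel a b → MSat M I b → MSat M J b
  | .box I, a => ∀ b, M.rel a b → ∀ c, M.relBox b c → MSat M I c
  | .diam I, a => ∃ b, M.relDiam a b ∧ MSat M I b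

theorem sat_ST (M : Model) (I : MForm) : ∀ (x : ℕ) (α : ℕ → M.U),
    Sat M (ST false true I x) α ↔ MSat M I (α x) := by
  induction I with
  | bot => intro x α; simp [ST, Sat, MSat]
  | prop n => intro x α; simp [ST, Sat, MSat]
  | conj I J ihI ihJ => intro x α; simp [ST, Sat, MSat, ihI, ihJ]
  | disj I J ihI ihJ => intro x α; simp [ST, Sat, MSat, ihI, ihJ]
  | impl I J ihI ihJ => intro x α; simp [ST, Sat, MSat, ihI, ihJ, Model.relOf]
  | box I ih => intro x α; simp [ST, Sat, MSat, ih, Model.relOf]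
  | diam I ih => intro x α; simp [ST, Sat, MSat, ih, Model.relOf]

theorem sat_congr (M : Model) (φ : FOForm) : ∀ (α β : ℕ → M.U),
    (∀ v ∈ φ.freeVars, α v = β v) → (Sat M φ α ↔ Sat M φ β) := by
  induction φ with
  | falsum => intro α β h; simp [Sat]
  | pred n v => intro α β h; simp [Sat, h v (by simp [FOForm.freeVars])]
  | rel s v w =>
    intro α β h
    simp [Sat, h v (by simp [FOForm.freeVars]), h w (by simp [FOForm.freeVars])]
  | conj f g hf hg =>
    intro α β h
    simp only [Sat]
    rw [hf α β (fun v hv => h v (by simp [FOForm.freeVars, hv])),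
      hg α β (fun v hv => h v (by simp [FOForm.freeVars, hv]))]
  | disj f g hf hg =>
    intro α β h
    simp only [Sat]
    rw [hf α β (fun v hv => h v (by simp [FOForm.freeVars, hv])),
      hg α β (fun v hv => h v (by simp [FOForm.freeVars, hv]))]
  | impl f g hf hg =>
    intro α β h
    simp only [Sat]
    rw [hf α β (fun v hv => h v (by simp [FOForm.freeVars, hv])),
      hg α β (fun v hv => h v (by simp [FOForm.freeVars, hv]))]
  | all v f hf =>
    intro α β h
    simp only [Sat]
    refine forall_congr' fun u => hf _ _ fun w hw => ?_
    by_cases hwv : w = v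
    · subst hwv; simp
    · simp [Function.update_of_ne hwv, h w (by simp [FOForm.freeVars, hw, hwv])]
  | ex v f hf =>
    intro α β h
    simp only [Sat]
    refine exists_congr fun u => hf _ _ fun w hw => ?_
    by_cases hwv : w = v
    · subst hwv; simp
    · simp [Function.update_of_ne hwv, h w (by simp [FOForm.freeVars, hw, hwv])]

/-- Make all letters outside `Θ` empty. -/
def Model.restr (M : Model) (Θ : Set ℕ) : Model where
  U := M.U
  rel := M.rel
  relBox := M.relBox
  relDiam := M.relDiam
  pred n a := n ∈ Θ ∧ M.pred n a

theorem sat_restr (M : Model) (Θ : Set ℕ) (φ : FOForm) : (φ.predLetters : Set ℕ) ⊆ Θ →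
    ∀ (α : ℕ → M.U), Sat (M.restr Θ) φ α ↔ Sat M φ α := by
  induction φ with
  | falsum => intro h α; rfl
  | pred n v =>
    intro h α
    have : n ∈ Θ := h (by simp [FOForm.predLetters])
    exact and_iff_right this
  | rel s v w => intro h α; cases s <;> rfl
  | conj f g hf hg =>
    intro h α
    simp only [FOForm.predLetters, Finset.coe_union, Set.union_subset_iff] at h
    exact and_congr (hf h.1 α) (hg h.2 α)
  | disj f g hf hg =>
    intro h α
    simp only [FOForm.predLetters, Finset.coe_union, Set.union_subset_iff] at h
    exact or_congr (hf h.1 α) (hg h.2 α)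
  | impl f g hf hg =>
    intro h α
    simp only [FOForm.predLetters, Finset.coe_union, Set.union_subset_iff] at h
    exact imp_congr (hf h.1 α) (hg h.2 α)
  | all v f hf => intro h α; exact forall_congr' fun u => hf h (Function.update α v u)
  | ex v f hf => intro h α; exact exists_congr fun u => hf h (Function.update α v u)

/-- Modal formulas are preserved by asimulations. -/
theorem mSat_mono (M N : Model) (A : M.U → N.U → Prop) (B : N.U → M.U → Prop)
    (b1 : BaseCondE M N Set.univ A) (b2 : BaseCondE N M Set.univ B)
    (s1 : StepCondE M N A B) (s2 : StepCondE N M B A)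
    (x1 : Box2CondE M N A) (x2 : Box2CondE N M B)
    (d1 : Diam1CondE M N A) (d2 : Diam1CondE N M B) (I : MForm) :
    (∀ a b, A a b → MSat M I a → MSat N I b) ∧ (∀ a b, B a b → MSat N I a → MSat M I b) := by
  induction I with
  | bot => exact ⟨fun _ _ _ h => h, fun _ _ _ h => h⟩
  | prop n => exact ⟨fun a b h => b1 a b h n trivial, fun a b h => b2 a b h n trivial⟩
  | conj I J ihI ihJ =>
    exact ⟨fun a b h => And.imp (ihI.1 a b h) (ihJ.1 a b h),
      fun a b h => And.imp (ihI.2 a b h) (ihJ.2 a b h)⟩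
  | disj I J ihI ihJ =>
    exact ⟨fun a b h => Or.imp (ihI.1 a b h) (ihJ.1 a b h),
      fun a b h => Or.imp (ihI.2 a b h) (ihJ.2 a b h)⟩
  | impl I J ihI ihJ =>
    constructor
    · intro a b h hs d hd hI
      obtain ⟨c, hc, h1, h2⟩ := s1 a b d h hd
      exact ihJ.1 _ _ h1 (hs c hc (ihI.2 _ _ h2 hI))
    · intro a b h hs d hd hI
      obtain ⟨c, hc, h1, h2⟩ := s2 a b d h hd
      exact ihJ.2 _ _ h1 (hs c hc (ihI.1 _ _ h2 hI))
  | box I ih =>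
    constructor
    · intro a b h hs d hd f hf
      obtain ⟨c, e, hc, he, h1⟩ := x1 a b d f h hd hf
      exact ih.1 _ _ h1 (hs c hc e he)
    · intro a b h hs d hd f hf
      obtain ⟨c, e, hc, he, h1⟩ := x2 a b d f h hd hf
      exact ih.2 _ _ h1 (hs c hc e he)
  | diam I ih =>
    constructor
    · rintro a b h ⟨c, hc, hI⟩
      obtain ⟨d, hd, h1⟩ := d1 a c b h hc
      exact ⟨d, hd, ih.1 _ _ h1 hI⟩
    · rintro a b h ⟨c, hc, hI⟩
      obtain ⟨d, hd, h1⟩ := d2 a c b h hc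
      exact ⟨d, hd, ih.2 _ _ h1 hI⟩

/-- A nonprincipal ultrafilter on `ℕ`. -/
noncomputable def uf : Ultrafilter ℕ := Filter.hyperfilter ℕ

theorem uf_ge (k : ℕ) : ∀ᶠ i in (uf : Filter ℕ), k ≤ i := by
  have h : (uf : Filter ℕ) ≤ Filter.atTop := by
    rw [← Nat.cofinite_eq_atTop]; exact Filter.hyperfilter_le_cofinite
  exact h (Filter.eventually_ge_atTop k)

/-- Ultraproduct (no quotient is needed, since the language has no identity). -/
def Ult (M : ℕ → Model) : Model where
  U := ∀ i, (M i).U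
  rel f g := ∀ᶠ i in (uf : Filter ℕ), (M i).rel (f i) (g i)
  relBox f g := ∀ᶠ i in (uf : Filter ℕ), (M i).relBox (f i) (g i)
  relDiam f g := ∀ᶠ i in (uf : Filter ℕ), (M i).relDiam (f i) (g i)
  pred n f := ∀ᶠ i in (uf : Filter ℕ), (M i).pred n (f i)

theorem update_eval {M : ℕ → Model} (α : ℕ → (Ult M).U) (v : ℕ) (u : (Ult M).U) (i : ℕ) :
    (fun w => (Function.update α v u w : (Ult M).U) i) =
      Function.update (fun w => α w i) v (u i) := by
  funext w
  by_cases h : w = v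
  · subst h; simp
  · simp [Function.update_of_ne h]

theorem los (M : ℕ → Model) (φ : FOForm) : ∀ (α : ℕ → (Ult M).U),
    Sat (Ult M) φ α ↔ ∀ᶠ i in (uf : Filter ℕ), Sat (M i) φ (fun v => α v i) := by
  induction φ with
  | falsum => intro α; simp [Sat, uf.neBot.ne]
  | pred n v => intro α; rfl
  | rel s v w => intro α; cases s <;> rfl
  | conj f g hf hg => intro α; simp only [Sat, hf, hg, Filter.eventually_and]
  | disj f g hf hg => intro α; simp only [Sat, hf, hg, Ultrafilter.eventually_or]
  | impl f g hf hg => intro α; simp only [Sat, hf, hg, Ultrafilter.eventually_imp]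
  | all v f hf =>
    intro α
    simp only [Sat, hf, update_eval]
    constructor
    · intro h
      by_contra hc
      rw [← Ultrafilter.eventually_not] at hc
      have : ∀ i, ∃ u : (M i).U, (¬ ∀ u, Sat (M i) f (Function.update (fun w => α w i) v u)) →
          ¬ Sat (M i) f (Function.update (fun w => α w i) v u) := by
        intro i
        by_cases hh : ∀ u, Sat (M i) f (Function.update (fun w => α w i) v u)
        · exact ⟨α 0 i, fun h' => absurd hh h'⟩
        · obtain ⟨u, hu⟩ := not_forall.1 hh
          exact ⟨u, fun _ => hu⟩
      choose u hu using this
      obtain ⟨i, h1, h2⟩ := ((h u).and hc).exists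
      exact hu i h2 h1
    · intro h u
      exact h.mono fun i hi => hi _
  | ex v f hf =>
    intro α
    simp only [Sat, hf, update_eval]
    constructor
    · rintro ⟨u, hu⟩
      exact hu.mono fun i hi => ⟨_, hi⟩
    · intro h
      have : ∀ i, ∃ u : (M i).U, (∃ u, Sat (M i) f (Function.update (fun w => α w i) v u)) →
          Sat (M i) f (Function.update (fun w => α w i) v u) := by
        intro i
        by_cases hh : ∃ u, Sat (M i) f (Function.update (fun w => α w i) v u)
        · obtain ⟨u, hu⟩ := hh
          exact ⟨u, fun _ => hu⟩
        · exact ⟨α 0 i, fun h' => absurd h' hh⟩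
      choose u hu using this
      exact ⟨u, h.mono fun i hi => hu i hi⟩

theorem losM (M : ℕ → Model) (I : MForm) (f : (Ult M).U) :
    MSat (Ult M) I f ↔ ∀ᶠ i in (uf : Filter ℕ), MSat (M i) I (f i) := by
  have h := los M (ST false true I 0) (fun _ => f)
  simp only [sat_ST] at h
  exact h

theorem losM_not (M : ℕ → Model) (I : MForm) (f : (Ult M).U) :
    ¬ MSat (Ult M) I f ↔ ∀ᶠ i in (uf : Filter ℕ), ¬ MSat (M i) I (f i) := by
  rw [losM, Ultrafilter.eventually_not]

/-- Saturation of ultraproducts. -/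
theorem saturation (X : ℕ → Type) (x0 : ∀ i, X i) (Q : ℕ → ∀ i, X i → Prop)
    (h : ∀ k, ∀ᶠ i in (uf : Filter ℕ), ∃ x : X i, ∀ j ≤ k, Q j i x) :
    ∃ x : ∀ i, X i, ∀ k, ∀ᶠ i in (uf : Filter ℕ), Q k i (x i) := by
  classical
  have key : ∀ i, ∃ x : X i, ∀ k ≤ i, (∃ y : X i, ∀ j ≤ k, Q j i y) → Q k i x := by
    intro i
    by_cases h0 : ∃ k ≤ i, ∃ y : X i, ∀ j ≤ k, Q j i y
    · obtain ⟨k0, hk0, hy0⟩ := h0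
      have hs := Nat.findGreatest_spec (P := fun k => ∃ y : X i, ∀ j ≤ k, Q j i y) hk0 hy0
      obtain ⟨y, hy⟩ := hs
      exact ⟨y, fun k hk hk' => hy k (Nat.le_findGreatest hk hk')⟩
    · exact ⟨x0 i, fun k hk hy => absurd ⟨k, hk, hy⟩ h0⟩
  choose x hx using key
  refine ⟨x, fun k => ?_⟩
  filter_upwards [h k, uf_ge k] with i h1 h2
  exact hx i k h2 h1

/-- Numerical code of a modal formula. -/
def codeM : MForm → ℕ
  | .bot => Nat.pair 0 0
  | .prop n => Nat.pair 1 n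
  | .conj I J => Nat.pair 2 (Nat.pair (codeM I) (codeM J))
  | .disj I J => Nat.pair 3 (Nat.pair (codeM I) (codeM J))
  | .impl I J => Nat.pair 4 (Nat.pair (codeM I) (codeM J))
  | .box I => Nat.pair 5 (codeM I)
  | .diam I => Nat.pair 6 (codeM I)

theorem codeM_inj : ∀ I J : MForm, codeM I = codeM J → I = J := by
  intro I
  induction I with
  | bot => intro J h; cases J <;> simp_all [codeM, Nat.pair_eq_pair]
  | prop n => intro J h; cases J <;> simp_all [codeM, Nat.pair_eq_pair]
  | conj I J ihI ihJ =>
    intro K h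
    cases K <;> simp [codeM, Nat.pair_eq_pair] at h
    rw [ihI _ h.1, ihJ _ h.2]
  | disj I J ihI ihJ =>
    intro K h
    cases K <;> simp [codeM, Nat.pair_eq_pair] at h
    rw [ihI _ h.1, ihJ _ h.2]
  | impl I J ihI ihJ =>
    intro K h
    cases K <;> simp [codeM, Nat.pair_eq_pair] at h
    rw [ihI _ h.1, ihJ _ h.2]
  | box I ih =>
    intro K h
    cases K <;> simp [codeM, Nat.pair_eq_pair] at h
    rw [ih _ h]
  | diam I ih =>
    intro K h
    cases K <;> simp [codeM, Nat.pair_eq_pair] at h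
    rw [ih _ h]

theorem exists_enum : ∃ e : ℕ → MForm, Function.Surjective e := by
  have : Countable MForm := ⟨⟨codeM, fun I J h => codeM_inj I J h⟩⟩
  have : Nonempty MForm := ⟨.bot⟩
  exact exists_surjective_nat MForm

theorem exists_conj (e : ℕ → MForm) (S : ℕ → Prop) (k : ℕ) : ∃ I : MForm,
    ∀ (M : Model) (a : M.U), MSat M I a ↔ ∀ j ≤ k, S j → MSat M (e j) a := by
  have : ∀ k, ∃ I : MForm,
    ∀ (M : Model) (a : M.U), MSat M I a ↔ ∀ j < k, S j → MSat M (e j) a := by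
    intro k
    induction k with
    | zero => exact ⟨.impl .bot .bot, fun M a => by simp [MSat]⟩
    | succ k ih =>
      obtain ⟨I, hI⟩ := ih
      by_cases hS : S k
      · refine ⟨.conj I (e k), fun M a => ?_⟩
        simp only [MSat, hI, Nat.lt_succ_iff_lt_or_eq]
        grind
      · refine ⟨I, fun M a => ?_⟩
        simp only [hI, Nat.lt_succ_iff_lt_or_eq]
        grind
  obtain ⟨I, hI⟩ := this (k + 1)
  exact ⟨I, fun M a => by rw [hI]; simp⟩

theorem exists_disj (e : ℕ → MForm) (S : ℕ → Prop) (k : ℕ) : ∃ I : MForm,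
    ∀ (M : Model) (a : M.U), MSat M I a ↔ ∃ j ≤ k, S j ∧ MSat M (e j) a := by
  have : ∀ k, ∃ I : MForm,
    ∀ (M : Model) (a : M.U), MSat M I a ↔ ∃ j < k, S j ∧ MSat M (e j) a := by
    intro k
    induction k with
    | zero => exact ⟨.bot, fun M a => by simp [MSat]⟩
    | succ k ih =>
      obtain ⟨I, hI⟩ := ih
      by_cases hS : S k
      · refine ⟨.disj I (e k), fun M a => ?_⟩
        simp only [MSat, hI, Nat.lt_succ_iff_lt_or_eq]
        grind
      · refine ⟨I, fun M a => ?_⟩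
        simp only [hI, Nat.lt_succ_iff_lt_or_eq]
        grind
  obtain ⟨I, hI⟩ := this (k + 1)
  exact ⟨I, fun M a => by rw [hI]; simp⟩

/-- Inclusion of modal types. -/
def TpLe (M N : Model) (a : M.U) (b : N.U) : Prop := ∀ I, MSat M I a → MSat N I b

theorem ult_step (M N : ℕ → Model) :
    StepCondE (Ult M) (Ult N) (TpLe _ _) (TpLe _ _) := by
  intro a b d hab hbd
  obtain ⟨e, he⟩ := exists_enum
  obtain ⟨c, hc⟩ := saturation (fun i => (M i).U) a
    (fun k i c => (M i).rel (a i) c ∧ (MSat (M i) (e k) c ↔ MSat (Ult N) (e k) d)) (by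
      intro k
      obtain ⟨I, hI⟩ := exists_conj e (fun j => MSat (Ult N) (e j) d) k
      obtain ⟨J, hJ⟩ := exists_disj e (fun j => ¬ MSat (Ult N) (e j) d) k
      have hb : ¬ MSat (Ult N) (.impl I J) b := by
        intro h
        have h2 := h d hbd ((hI _ _).2 fun j _ hj => hj)
        obtain ⟨j, _, h3, h4⟩ := (hJ _ _).1 h2
        exact h3 h4
      have ha := (losM_not _ _ _).1 (fun h => hb (hab _ h))
      filter_upwards [ha] with i hi
      simp only [MSat, not_forall] at hi
      obtain ⟨c, hc, h1, h2⟩ := hi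
      rw [hI] at h1
      rw [hJ] at h2
      refine ⟨c, fun j hj => ⟨hc, fun h => ?_, fun h => h1 j hj h⟩⟩
      by_contra h'
      exact h2 ⟨j, hj, h', h⟩)
  have hiff : ∀ I, MSat (Ult M) I c ↔ MSat (Ult N) I d := by
    intro I
    obtain ⟨k, rfl⟩ := he I
    constructor
    · intro h
      obtain ⟨i, h1, h2⟩ := ((hc k).and ((losM _ _ _).1 h)).exists
      exact h1.2.1 h2
    · intro h
      exact (losM _ _ _).2 ((hc k).mono fun i hi => hi.2.2 h)
  exact ⟨c, (hc 0).mono fun i hi => hi.1, fun I => (hiff I).1, fun I => (hiff I).2⟩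

theorem ult_box (M N : ℕ → Model) :
    Box2CondE (Ult M) (Ult N) (TpLe _ _) := by
  intro a b d f hab hbd hdf
  obtain ⟨e, he⟩ := exists_enum
  obtain ⟨c, hc⟩ := saturation (fun i => (M i).U × (M i).U) (fun i => (a i, a i))
    (fun k i c => (M i).rel (a i) c.1 ∧ (M i).relBox c.1 c.2 ∧
      (MSat (M i) (e k) c.2 → MSat (Ult N) (e k) f)) (by
      intro k
      obtain ⟨J, hJ⟩ := exists_disj e (fun j => ¬ MSat (Ult N) (e j) f) k
      have hb : ¬ MSat (Ult N) (.box J) b := by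
        intro h
        obtain ⟨j, _, h3, h4⟩ := (hJ _ _).1 (h d hbd f hdf)
        exact h3 h4
      have ha := (losM_not _ _ _).1 (fun h => hb (hab _ h))
      filter_upwards [ha] with i hi
      simp only [MSat, not_forall] at hi
      obtain ⟨c, hc, c', hc', h2⟩ := hi
      rw [hJ] at h2
      refine ⟨(c, c'), fun j hj => ⟨hc, hc', fun h => ?_⟩⟩
      by_contra h'
      exact h2 ⟨j, hj, h', h⟩)
  refine ⟨fun i => (c i).1, fun i => (c i).2, (hc 0).mono fun i hi => hi.1,
    (hc 0).mono fun i hi => hi.2.1, fun I h => ?_⟩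
  obtain ⟨k, rfl⟩ := he I
  obtain ⟨i, h1, h2⟩ := ((hc k).and ((losM _ _ _).1 h)).exists
  exact h1.2.2 h2

theorem ult_diam (M N : ℕ → Model) :
    Diam1CondE (Ult M) (Ult N) (TpLe _ _) := by
  intro a c b hab hac
  obtain ⟨e, he⟩ := exists_enum
  obtain ⟨d, hd⟩ := saturation (fun i => (N i).U) b
    (fun k i d => (N i).relDiam (b i) d ∧ (MSat (Ult M) (e k) c → MSat (N i) (e k) d)) (by
      intro k
      obtain ⟨I, hI⟩ := exists_conj e (fun j => MSat (Ult M) (e j) c) k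
      have ha : MSat (Ult M) (.diam I) a := ⟨c, hac, (hI _ _).2 fun j _ hj => hj⟩
      have hb := (losM _ _ _).1 (hab _ ha)
      filter_upwards [hb] with i hi
      obtain ⟨d, hd, h1⟩ := hi
      rw [hI] at h1
      exact ⟨d, fun j hj => ⟨hd, fun h => h1 j hj h⟩⟩)
  refine ⟨d, (hd 0).mono fun i hi => hi.1, fun I h => ?_⟩
  obtain ⟨k, rfl⟩ := he I
  exact (losM _ _ _).2 ((hd k).mono fun i hi => hi.2 h)

theorem ult_asim (M N : ℕ → Model) (t : (Ult M).U) (u : (Ult N).U)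
    (h : TpLe (Ult M) (Ult N) t u) :
    IsAsimD1 false Set.univ (Ult M) (Ult N) t u (TpLe _ _) (TpLe _ _) := by
  refine ⟨h, fun a b hab n _ => hab (.prop n), fun a b hab n _ => hab (.prop n),
    ult_step M N, ult_step N M, ?_, ult_diam M N, ult_diam N M⟩
  simpa using And.intro (ult_box M N) (ult_box N M)

theorem backward (x : ℕ) (φ : FOForm) (hfv : φ.freeVars ⊆ {x}) (hinv : InvariantD1 false x φ) :
    ∃ I : MForm, Equiv φ (ST false true I x) := by
  by_contra hno
  obtain ⟨e, he⟩ := exists_enum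
  -- Step 1: a model of all modal consequences of `φ` which refutes `φ`
  have h1 : ∀ k, ∃ (M : Model) (β : ℕ → M.U), ¬ Sat M φ β ∧
      ∀ j ≤ k, Entails φ (ST false true (e j) x) → MSat M (e j) (β x) := by
    intro k
    obtain ⟨C, hC⟩ := exists_conj e (fun j => Entails φ (ST false true (e j) x)) k
    by_contra hc
    refine hno ⟨C, fun M β => ?_⟩
    rw [sat_ST, hC]
    constructor
    · intro h j _ hj
      exact (sat_ST _ _ _ _).1 (hj M β h)
    · intro h
      by_contra h'
      exact hc ⟨M, β, h', h⟩
  choose M β hβ hM using h1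
  -- Step 2
  have h2 : ∀ k, ∃ (N : Model) (α : ℕ → N.U), Sat N φ α ∧
      ∀ j ≤ k, ¬ MSat (Ult M) (e j) (fun i => β i x) → ¬ MSat N (e j) (α x) := by
    intro k
    obtain ⟨D, hD⟩ := exists_disj e (fun j => ¬ MSat (Ult M) (e j) (fun i => β i x)) k
    by_contra hc
    have hent : Entails φ (ST false true D x) := by
      intro N α h
      rw [sat_ST, hD]
      by_contra h'
      refine hc ⟨N, α, h, fun j hj h1 h2 => h' ⟨j, hj, h1, h2⟩⟩
    have hu : MSat (Ult M) D (fun i => β i x) := by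
      refine (losM _ _ _).2 ?_
      obtain ⟨m, rfl⟩ := he D
      exact (uf_ge m).mono fun i hi => hM i m hi hent
    obtain ⟨j, _, h3, h4⟩ := (hD _ _).1 hu
    exact h3 h4
  choose N α hα hN using h2
  have hle : TpLe (Ult N) (Ult M) (fun i => α i x) (fun i => β i x) := by
    intro I h
    by_contra h'
    obtain ⟨m, rfl⟩ := he I
    obtain ⟨i, h3, h4⟩ := (((losM _ _ _).1 h).and (uf_ge m)).exists
    exact hN i m h4 h' h3
  have hs := hinv Set.univ (Set.subset_univ _) (Ult N) (Ult M) _ _ _ _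
    (ult_asim N M _ _ hle) _ _ hle
  have hsat : SatAt (Ult N) (fun i => α i x) x φ := by
    intro γ hγ
    refine (sat_congr _ φ γ (fun v i => α i v) ?_).2 ?_
    · intro v hv
      have : v = x := by simpa using hfv hv
      subst this; exact hγ
    · exact (los _ _ _).2 (Filter.Eventually.of_forall hα)
  have hfin := hs hsat (fun v i => β i v) rfl
  obtain ⟨i, hi⟩ := ((los _ _ _).1 hfin).exists
  exact hβ i hi

theorem forward (x : ℕ) (φ : FOForm) (I : MForm) (hI : Equiv φ (ST false true I x)) :
    InvariantD1 false x φ := by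
  intro Θ hΘ M N t u A B hA a b hab ha β hβ
  obtain ⟨_, b1, b2, s1, s2, hbox, d1, d2⟩ := hA
  simp only [Bool.false_eq_true, if_false] at hbox
  have hmono := mSat_mono (M.restr Θ) (N.restr Θ) A B
    (fun a b h n _ hp => ⟨hp.1, b1 a b h n hp.1 hp.2⟩)
    (fun a b h n _ hp => ⟨hp.1, b2 a b h n hp.1 hp.2⟩) s1 s2 hbox.1 hbox.2 d1 d2 I
  have h1 : Sat (M.restr Θ) φ (fun _ => a) := (sat_restr M Θ φ hΘ _).2 (ha _ rfl)
  have h2 : MSat (M.restr Θ) I a :=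
    (sat_ST (M.restr Θ) I x (fun _ => a)).1 ((hI (M.restr Θ) _).1 h1)
  have h3 : MSat (N.restr Θ) I (β x) := by rw [hβ]; exact hmono.1 a b hab h2
  exact (sat_restr N Θ φ hΘ β).1 ((hI (N.restr Θ) β).2 ((sat_ST (N.restr Θ) I x β).2 h3))

/-- **Theorem 2, case (i,j) = (2,1).**  φ(x) is logically equivalent to the
(2,1)-standard x-translation of a modal intuitionistic formula iff φ(x) is
invariant with respect to (2,1)-modal asimulations. -/
theorem statement_5 (x : ℕ) (φ : FOForm) (hfv : φ.freeVars ⊆ {x}) :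
    (∃ I : MForm, Equiv φ (ST false true I x)) ↔ InvariantD1 false x φ :=
  ⟨fun ⟨I, hI⟩ => forward x φ I hI, backward x φ hfv⟩

end ModalIntAsim
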